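/- Let G be a finite group with tp(G) > 4/81. Then G is nilpotent or G has a section isomorphic to one of the groups A_4, D_3, D_5, D_7 (where D_n denotes the dihedral group of order 2n), i.e. there exist subgroups N ⊴ H ≤ G with H/N isomorphic to one of these four groups. -/

import Mathlib

/-!
For `g ∈ G` let `m` be the number of left cosets in the double coset `HgH`; it is also the number
of right cosets, and each left coset meets each right coset in the same number of elements. Hence
`P_G(H)` is the product of the factors `m! / m ^ m` over all double cosets. Only upper bounds for
`P_G(H)` are needed: `exists_transProb_le` compares `G` with a section, and `transProb_le_of_free`
treats a subgroup `M` all of whose `k` nontrivial double cosets are free, that is, of size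
`m ^ 2` with `m = |M|`, which gives `P(M) ≤ (m! / m ^ m) ^ k` and index `1 + k m`.

Let `G` be non-nilpotent and let `X` be a non-nilpotent section of least order, so that the proper
subgroups and proper quotients of `X` are nilpotent. A non-normal maximal subgroup `M` of `X` is
then core-free and meets each of its other conjugates trivially (`exists_free_subgroup`), so that
the bound above applies. From `tp G > 4 / 81` it follows that `m = 2` and `k ≤ 4`, or `m = 3` and
`k = 1`, or `m = 4` and `k = 1` (`small_of_bound`). For `m = 3` the group `X` acts faithfully on
the four cosets of `M` and has order `12`, so it is `A₄`. For even `m` the index of `M` is `3`, `5`,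
`7` or `9`, and the product of an involution of `M` with a conjugate outside `M` has odd order
dividing this index and is inverted by the involution (`exists_inverted`), which yields a dihedral
section of order `6`, `10` or `14`.
-/

open scoped Pointwise Classical

/-- `T` is simultaneously a left transversal for `H` (each left coset `gH` contains exactly one
element of `T`) and a right transversal for `K` (each right coset `Kg` contains exactly one
element of `T`). -/
def IsDoubleTransversal {G : Type*} [Group G] (H K : Subgroup G) (T : Set G) : Prop :=
  (∀ g : G, ∃! t : G, t ∈ T ∧ g⁻¹ * t ∈ H) ∧ (∀ g : G, ∃! t : G, t ∈ T ∧ t * g⁻¹ ∈ K)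

/-- `|DT_G(H,K)|`: the number of common transversals for the pair `(H, K)`. -/
noncomputable def numDT {G : Type*} [Group G] (H K : Subgroup G) : ℕ :=
  Nat.card {T : Set G // IsDoubleTransversal H K T}

/-- `P_G(H,K) = |DT_G(H,K)| / |H| ^ (G:H)`, the common transversal probability. -/
noncomputable def transProb {G : Type*} [Group G] (H K : Subgroup G) : ℚ :=
  (numDT H K : ℚ) / (Nat.card H : ℚ) ^ H.index

/-- `tp(G)`: the minimum of `P_G(H) = P_G(H,H)` over all subgroups `H ≤ G`. -/
noncomputable def tp (G : Type*) [Group G] [Finite G] : ℚ :=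
  haveI : Finite (Subgroup G) :=
    Finite.of_injective (fun H : Subgroup G => (H : Set G)) SetLike.coe_injective
  haveI : Fintype (Subgroup G) := Fintype.ofFinite _
  Finset.univ.inf' Finset.univ_nonempty (fun H : Subgroup G => transProb H H)

/-- `G` has a section isomorphic to `X`: there are subgroups `N ⊴ H ≤ G` with `H/N ≅ X`,
equivalently (as formalized here) some subgroup of `G` admits a surjective homomorphism
onto `X`. -/
def HasSectionIsomorphicTo (G : Type*) [Group G] (X : Type*) [Group X] : Prop :=
  ∃ (H : Subgroup G) (φ : H →* X), Function.Surjective φ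

/-! ### Counting common transversals -/

/-- Every probability `P_X(M)` in a section `X` of `G` is bounded below by some `P_G(H)`: if
`φ : K → X` is a surjection from a subgroup `K` of `G` and `H = φ⁻¹(M)`, a common transversal `T`
of `H` in `G` is determined by the common transversal `φ(T ∩ K)` of `M` in `X`, by the lifts of
its elements (one choice in `ker φ` for each left coset of `M`), and by the choice of an element
in each left coset of `H` outside `K`. -/
theorem exists_transProb_le {G : Type*} [Group G] [Finite G] {X : Type*} [Group X] [Finite X]
    (K : Subgroup G) (φ : K →* X) (hφ : Function.Surjective φ) (M : Subgroup X) :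
    ∃ H : Subgroup G, transProb H H ≤ transProb M M := by
  set H : Subgroup G := (M.comap φ).map K.subtype with hH
  have memH : ∀ k : K, (k : G) ∈ H ↔ φ k ∈ M := by
    intro k; simp [hH]
  have HK : ∀ g ∈ H, g ∈ K := by
    intro g hg
    exact Subgroup.map_subtype_le _ hg
  obtain ⟨l, hl⟩ := hφ.hasRightInverse
  set ι : X ⧸ M → G ⧸ H := fun q => ((l q.out : K) : G) with hι
  have ιinj : Function.Injective ι := by
    intro p q hpq
    rw [hι] at hpq
    have h1 := QuotientGroup.eq.1 hpq
    have h2 : (((l p.out)⁻¹ * l q.out : K) : G) ∈ H := by simpa using h1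
    rw [memH, map_mul, map_inv, hl, hl] at h2
    have h3 := QuotientGroup.eq.2 h2
    simpa using h3
  -- the encoding of a common transversal of `H`
  have key : ∀ T : {T : Set G // IsDoubleTransversal H H T},
      ∃ d : {T : Set X // IsDoubleTransversal M M T} × (X ⧸ M → φ.ker) ×
          ({q : G ⧸ H // q ∉ Set.range ι} → H),
        (d.1 : Set X) = {x | ∃ k : K, (k : G) ∈ T.1 ∧ φ k = x} ∧
        (∀ x ∈ d.1.1, ((l x * (d.2.1 (x : X ⧸ M) : K) : K) : G) ∈ T.1) ∧
        (∀ q, q.1.out * (d.2.2 q : G) ∈ T.1) := by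
    rintro ⟨T, hT1, hT2⟩
    have hbar : IsDoubleTransversal M M {x | ∃ k : K, (k : G) ∈ T ∧ φ k = x} := by
      constructor
      · intro x
        obtain ⟨t, ⟨ht, htH⟩, hu⟩ := hT1 (l x)
        have htK : t ∈ K := by
          have := K.mul_mem (l x).2 (HK _ htH)
          simpa using this
        refine ⟨φ ⟨t, htK⟩, ⟨⟨⟨t, htK⟩, ht, rfl⟩, ?_⟩, ?_⟩
        · have : (((l x)⁻¹ * ⟨t, htK⟩ : K) : G) ∈ H := by simpa using htH
          rwa [memH, map_mul, map_inv, hl] at this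
        · rintro _ ⟨⟨k, hk, rfl⟩, hkM⟩
          have : (((l x)⁻¹ * k : K) : G) ∈ H := by
            rw [memH, map_mul, map_inv, hl]; exact hkM
          have := hu k ⟨hk, by simpa using this⟩
          congr 1
          exact Subtype.ext this
      · intro x
        obtain ⟨t, ⟨ht, htH⟩, hu⟩ := hT2 (l x)
        have htK : t ∈ K := by
          have := K.mul_mem (HK _ htH) (l x).2
          simpa using this
        refine ⟨φ ⟨t, htK⟩, ⟨⟨⟨t, htK⟩, ht, rfl⟩, ?_⟩, ?_⟩
        · have : ((⟨t, htK⟩ * (l x)⁻¹ : K) : G) ∈ H := by simpa using htH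
          rwa [memH, map_mul, map_inv, hl] at this
        · rintro _ ⟨⟨k, hk, rfl⟩, hkM⟩
          have : ((k * (l x)⁻¹ : K) : G) ∈ H := by
            rw [memH, map_mul, map_inv, hl]; exact hkM
          have := hu k ⟨hk, by simpa using this⟩
          congr 1
          exact Subtype.ext this
    have h1 : ∀ q : X ⧸ M, ∃ n : φ.ker, ∀ x ∈ {x | ∃ k : K, (k : G) ∈ T ∧ φ k = x},
        (x : X ⧸ M) = q → ((l x * (n : K) : K) : G) ∈ T := by
      intro q
      obtain ⟨x, ⟨⟨k, hk, hkx⟩, hxq⟩, hu⟩ := hbar.1 q.out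
      refine ⟨⟨(l x)⁻¹ * k, ?_⟩, ?_⟩
      · rw [MonoidHom.mem_ker, map_mul, map_inv, hl, hkx, inv_mul_cancel]
      · intro y hy hyq
        have : y = x := by
          refine hu y ⟨hy, QuotientGroup.eq.1 ?_⟩
          rw [hyq]; simp
        subst this
        simpa using hk
    have h2 : ∀ q : {q : G ⧸ H // q ∉ Set.range ι}, ∃ w : H, q.1.out * (w : G) ∈ T := by
      intro q
      obtain ⟨t, ⟨ht, htH⟩, -⟩ := hT1 q.1.out
      exact ⟨⟨_, htH⟩, by simpa using ht⟩
    choose n hn using h1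
    choose w hw using h2
    exact ⟨⟨⟨_, hbar⟩, n, w⟩, rfl, fun x hx => hn _ x hx rfl, hw⟩
  choose F hF1 hF2 hF3 using key
  have sub : ∀ T T', F T = F T' → T.1 ⊆ T'.1 := by
    intro T T' hTT y hy
    by_cases hyK : y ∈ K
    · have hx : φ ⟨y, hyK⟩ ∈ (F T).1.1 := by
        rw [hF1]; exact ⟨⟨y, hyK⟩, hy, rfl⟩
      have hmem := hF2 T _ hx
      have hx' := hx
      rw [hTT] at hx'
      have hmem' := hF2 T' _ hx'
      rw [← hTT] at hmem'
      obtain ⟨t, -, hu⟩ := T.2.1 y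
      have e1 := hu y ⟨hy, by simp [H.one_mem]⟩
      have e2 := hu _ ⟨hmem, by
        have : ((⟨y, hyK⟩⁻¹ * (l (φ ⟨y, hyK⟩) *
            ((F T).2.1 (φ ⟨y, hyK⟩ : X ⧸ M) : K)) : K) : G) ∈ H := by
          rw [memH, map_mul, map_mul, hl, map_inv,
            (MonoidHom.mem_ker).1 ((F T).2.1 (φ ⟨y, hyK⟩ : X ⧸ M)).2]
          simp [M.one_mem]
        simpa using this⟩
      rw [e1, ← e2]
      exact hmem'
    · have hq : (y : G ⧸ H) ∉ Set.range ι := by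
        rintro ⟨q, hq⟩
        have := HK _ (QuotientGroup.eq.1 hq)
        exact hyK (by simpa using K.mul_mem (l q.out).2 this)
      have hmem := hF3 T ⟨_, hq⟩
      have hmem' := hF3 T' ⟨_, hq⟩
      rw [← hTT] at hmem'
      obtain ⟨t, -, hu⟩ := T.2.1 y
      have e1 := hu y ⟨hy, by simp [H.one_mem]⟩
      have e2 := hu _ ⟨hmem, by
        rw [← mul_assoc]
        refine H.mul_mem (QuotientGroup.eq.1 ?_) (SetLike.coe_mem _)
        simp⟩
      rw [e1, ← e2]
      exact hmem'
  have Finj : Function.Injective F := fun T T' h =>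
    Subtype.ext (Set.Subset.antisymm (sub T T' h) (sub T' T h.symm))
  have hcard := Nat.card_le_card_of_injective F Finj
  have hW : Nat.card {q : G ⧸ H // q ∉ Set.range ι} + M.index = H.index := by
    have h1 := Nat.card_congr (Equiv.sumCompl (· ∈ Set.range ι))
    rw [Nat.card_sum] at h1
    have h2 : Nat.card {q : G ⧸ H // q ∈ Set.range ι} = M.index :=
      (Nat.card_congr (Equiv.ofInjective ι ιinj)).symm
    rw [h2] at h1
    rw [add_comm]; exact h1
  have hcH : Nat.card H = Nat.card M * Nat.card φ.ker := by
    have e1 : Nat.card H = Nat.card (M.comap φ) :=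
      (Nat.card_congr ((M.comap φ).equivMapOfInjective K.subtype
        K.subtype_injective).toEquiv).symm
    have e2 := (M.comap φ).card_mul_index
    rw [Subgroup.index_comap_of_surjective _ hφ] at e2
    have e3 := φ.ker.card_mul_index
    rw [Subgroup.index_ker, MonoidHom.range_eq_top.2 hφ, Subgroup.card_top] at e3
    rw [e1]
    have e4 := M.card_mul_index
    have hpos : 0 < M.index := Nat.pos_of_ne_zero Subgroup.index_ne_zero_of_finite
    apply Nat.eq_of_mul_eq_mul_right hpos
    rw [e2, ← e3, ← e4]; ring
  refine ⟨H, ?_⟩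
  have hN : (numDT H H : ℚ) ≤ numDT M M * ((Nat.card φ.ker : ℚ) ^ M.index *
      (Nat.card H : ℚ) ^ (Nat.card {q : G ⧸ H // q ∉ Set.range ι})) := by
    have : numDT H H ≤ numDT M M * (Nat.card φ.ker ^ M.index *
        Nat.card H ^ (Nat.card {q : G ⧸ H // q ∉ Set.range ι})) := by
      rw [Nat.card_prod, Nat.card_prod, Nat.card_fun, Nat.card_fun] at hcard
      exact hcard
    exact_mod_cast this
  unfold transProb
  have p1 : (0 : ℚ) < Nat.card φ.ker := by exact_mod_cast Nat.card_pos
  have p2 : (0 : ℚ) < Nat.card M := by exact_mod_cast Nat.card_pos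
  have p3 : (0 : ℚ) < Nat.card H := by exact_mod_cast Nat.card_pos
  rw [div_le_div_iff₀ (by positivity) (by positivity)]
  calc (numDT H H : ℚ) * (Nat.card M : ℚ) ^ M.index
      ≤ numDT M M * ((Nat.card φ.ker : ℚ) ^ M.index *
      (Nat.card H : ℚ) ^ (Nat.card {q : G ⧸ H // q ∉ Set.range ι})) *
        (Nat.card M : ℚ) ^ M.index := by gcongr
    _ = numDT M M * ((Nat.card H : ℚ) ^ (Nat.card {q : G ⧸ H // q ∉ Set.range ι}) *
        ((Nat.card M : ℚ) * (Nat.card φ.ker : ℚ)) ^ M.index) := by rw [mul_pow]; ring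
    _ = numDT M M * (Nat.card H : ℚ) ^ H.index := by
      rw [← hW, pow_add]
      congr 3
      rw [hcH]; push_cast; ring

/-- If every nontrivial double coset of `M` is free, the elements outside `M` are uniquely of the
form `a * ρ i * b` with `a b ∈ M`, where `ρ` lists representatives of the nontrivial double
cosets. -/
theorem exists_doubleCoset_reps {X : Type*} [Group X] [Finite X] (M : Subgroup X)
    (hM : ∀ g ∉ M, ∀ a ∈ M, g⁻¹ * a * g ∈ M → a = 1) :
    ∃ (k : ℕ) (ρ : Fin k → X), (∀ i, ρ i ∉ M) ∧
      (∀ y ∉ M, ∃ i, ∃ a b : M, y = a * ρ i * b) ∧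
      (∀ i j, ∀ a b a' b' : M, (a * ρ i * b : X) = a' * ρ j * b' → i = j ∧ a = a' ∧ b = b') := by
  let Ω := {D : DoubleCoset.Quotient (M : Set X) M // D.out ∉ M}
  have : Finite (DoubleCoset.Quotient (M : Set X) M) := by
    unfold DoubleCoset.Quotient; infer_instance
  let e := Finite.equivFin Ω
  refine ⟨Nat.card Ω, fun i => (e.symm i).1.out, fun i => (e.symm i).2, ?_, ?_⟩
  · intro y hy
    obtain ⟨h, k, hh, hk, hy'⟩ := DoubleCoset.mk_out_eq_mul M M y
    have hout : (DoubleCoset.mk M M y).out ∉ M := by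
      rw [hy']
      intro hc
      rw [Subgroup.mul_mem_cancel_right _ hk, Subgroup.mul_mem_cancel_left _ hh] at hc
      exact hy hc
    refine ⟨e ⟨DoubleCoset.mk M M y, hout⟩, ⟨h, hh⟩⁻¹, ⟨k, hk⟩⁻¹, ?_⟩
    simp only [Equiv.symm_apply_apply]
    rw [hy']
    simp [mul_assoc]
  · intro i j a b a' b' h
    have hij : i = j := by
      apply e.symm.injective
      apply Subtype.ext
      rw [← DoubleCoset.out_eq' M M (e.symm i).1, ← DoubleCoset.out_eq' M M (e.symm j).1,
        DoubleCoset.eq]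
      refine ⟨_, (a'⁻¹ * a).2, _, (b * b'⁻¹).2, ?_⟩
      have h' : ((a' : X)⁻¹ * (a * (e.symm i).1.out * b) * (b' : X)⁻¹) = (e.symm j).1.out := by
        rw [h]; group
      rw [← h']
      push_cast
      group
    subst hij
    refine ⟨rfl, ?_⟩
    simp only at h
    set z := (e.symm i).1.out with hz
    have hzM : z ∉ M := (e.symm i).2
    have h1 : z⁻¹ * ((a'⁻¹ * a : M) : X) * z = ((b' * b⁻¹ : M) : X) := by
      push_cast
      have : (a : X) * z = a' * z * b' * (b : X)⁻¹ := by rw [← h]; group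
      calc z⁻¹ * ((a' : X)⁻¹ * a) * z = z⁻¹ * (a' : X)⁻¹ * (a * z) := by group
        _ = _ := by rw [this]; group
    have h2 := hM z hzM _ (a'⁻¹ * a).2 (by rw [h1]; exact SetLike.coe_mem _)
    have h3 : a = a' := by
      have : a'⁻¹ * a = 1 := Subtype.ext h2
      exact (inv_mul_eq_one.1 this).symm
    subst h3
    exact ⟨rfl, Subtype.ext (mul_left_cancel h)⟩

/-- If all `k` nontrivial double cosets of `M` are free, then, with `m = |M|`, the index of `M` is
`1 + k m` and `P_X(M) ≤ (m! / m ^ m) ^ k`: on each of these double cosets a common transversal is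
the graph of a permutation of `M`. -/
theorem transProb_le_of_free {X : Type*} [Group X] [Finite X] (M : Subgroup X)
    (hM : ∀ g ∉ M, ∀ a ∈ M, g⁻¹ * a * g ∈ M → a = 1) :
    ∃ k : ℕ, M.index = 1 + k * Nat.card M ∧
      transProb M M ≤ ((Nat.card M).factorial / (Nat.card M : ℚ) ^ Nat.card M) ^ k := by
  obtain ⟨k, ρ, hρ, hsurj, hinj⟩ := exists_doubleCoset_reps M hM
  have mpos : 0 < Nat.card M := Nat.card_pos
  have hindex : M.index = 1 + k * Nat.card M := by
    have hout : ∀ p : Fin k × M × M, (p.2.1 * ρ p.1 * p.2.2 : X) ∉ M := by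
      intro p hc
      rw [Subgroup.mul_mem_cancel_right _ p.2.2.2, Subgroup.mul_mem_cancel_left _ p.2.1.2] at hc
      exact hρ _ hc
    have hb : Function.Bijective (fun p : Fin k × M × M =>
        (⟨p.2.1 * ρ p.1 * p.2.2, hout p⟩ : {y : X // y ∉ M})) := by
      constructor
      · rintro ⟨i, a, b⟩ ⟨j, a', b'⟩ h
        obtain ⟨rfl, rfl, rfl⟩ := hinj i j a b a' b' (Subtype.ext_iff.1 h)
        rfl
      · rintro ⟨y, hy⟩
        obtain ⟨i, a, b, rfl⟩ := hsurj y hy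
        exact ⟨⟨i, a, b⟩, rfl⟩
    have h1 := Nat.card_congr (Equiv.ofBijective _ hb)
    have h2 := Nat.card_congr (Equiv.sumCompl (· ∈ M))
    rw [Nat.card_sum, ← h1, Nat.card_prod, Nat.card_prod, Nat.card_fin, ← M.card_mul_index] at h2
    apply Nat.eq_of_mul_eq_mul_left mpos
    rw [← h2]
    change Nat.card M + _ = _
    ring
  refine ⟨k, hindex, ?_⟩
  have key : ∀ T : {T : Set X // IsDoubleTransversal M M T},
      ∃ d : M × (Fin k → (M ↪ M)), (d.1 : X) ∈ T.1 ∧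
        ∀ i a, (a * ρ i * d.2 i a : X) ∈ T.1 := by
    rintro ⟨T, hT1, hT2⟩
    obtain ⟨t, ⟨ht, htM⟩, -⟩ := hT1 1
    have h1 : ∀ i, ∀ a : M, ∃ b : M, (a * ρ i * b : X) ∈ T := by
      intro i a
      obtain ⟨t, ⟨ht, htM⟩, -⟩ := hT1 (a * ρ i)
      exact ⟨⟨_, htM⟩, by rwa [mul_inv_cancel_left]⟩
    choose σ hσ using h1
    have σinj : ∀ i, Function.Injective (σ i) := by
      intro i a a' h
      obtain ⟨s, -, hu⟩ := hT2 (ρ i * σ i a)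
      have e1 := hu _ ⟨hσ i a, by simp [mul_assoc]⟩
      have e2 := hu _ ⟨hσ i a', by simp [mul_assoc, h]⟩
      exact (hinj _ _ _ _ _ _ (e1.trans e2.symm)).2.1
    exact ⟨⟨⟨t, by simpa using htM⟩, fun i => ⟨σ i, σinj i⟩⟩, ht, hσ⟩
  choose F hF1 hF2 using key
  have sub : ∀ T T', F T = F T' → T.1 ⊆ T'.1 := by
    intro T T' hTT y hy
    obtain ⟨t, -, hu⟩ := T.2.1 y
    have e1 := hu y ⟨hy, by simp [M.one_mem]⟩
    by_cases hyM : y ∈ M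
    · have e2 := hu _ ⟨hF1 T, M.mul_mem (M.inv_mem hyM) (F T).1.2⟩
      rw [e1, ← e2, hTT]
      exact hF1 T'
    · obtain ⟨i, a, b, rfl⟩ := hsurj y hyM
      have e2 := hu _ ⟨hF2 T i a, by
        have : ((a * ρ i * b : X)⁻¹ * (a * ρ i * (F T).2 i a)) = ((b⁻¹ * (F T).2 i a : M) : X) := by
          push_cast; group
        rw [this]; exact SetLike.coe_mem _⟩
      rw [e1, ← e2, hTT]
      exact hF2 T' i a
  have Finj : Function.Injective F := fun T T' h =>
    Subtype.ext (Set.Subset.antisymm (sub T T' h) (sub T' T h.symm))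
  have hcard := Nat.card_le_card_of_injective F Finj
  have hemb : Nat.card (M ↪ M) = (Nat.card M).factorial := by
    have := Fintype.ofFinite M
    rw [Nat.card_eq_fintype_card, Nat.card_eq_fintype_card, Fintype.card_embedding_eq,
      Nat.descFactorial_self]
  rw [Nat.card_prod, Nat.card_fun, hemb, Nat.card_fin] at hcard
  have hN : (numDT M M : ℚ) ≤ Nat.card M * ((Nat.card M).factorial : ℚ) ^ k := by
    exact_mod_cast hcard
  have p2 : (0 : ℚ) < Nat.card M := by exact_mod_cast mpos
  unfold transProb
  rw [hindex, div_pow, div_le_div_iff₀ (by positivity) (by positivity)]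
  calc (numDT M M : ℚ) * ((Nat.card M : ℚ) ^ Nat.card M) ^ k
      ≤ (Nat.card M * ((Nat.card M).factorial : ℚ) ^ k) * ((Nat.card M : ℚ) ^ Nat.card M) ^ k := by
        gcongr
    _ = _ := by rw [pow_add, pow_one, mul_comm k, pow_mul]; ring

theorem tp_le_transProb {G : Type*} [Group G] [Finite G] (H : Subgroup G) :
    tp G ≤ transProb H H := by
  unfold tp
  have : Finite (Subgroup G) :=
    Finite.of_injective (fun H : Subgroup G => (H : Set G)) SetLike.coe_injective
  let _ : Fintype (Subgroup G) := Fintype.ofFinite _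
  exact Finset.inf'_le _ (Finset.mem_univ H)

/-- The restrictions imposed by `4 / 81` on `m = |M|` and the number `k` of nontrivial double cosets:
at most four of them if `m = 2`, exactly one if `m = 3` or `m = 4`, and no other `m`. -/
theorem small_of_bound (m k : ℕ) (hm : 2 ≤ m) (hk : 1 ≤ k)
    (h : (4 / 81 : ℚ) < ((m.factorial : ℚ) / (m : ℚ) ^ m) ^ k) :
    (m = 2 ∧ k ≤ 4) ∨ (m = 3 ∧ k = 1) ∨ (m = 4 ∧ k = 1) := by
  have hle1 : (m.factorial : ℚ) / (m : ℚ) ^ m ≤ 1 := by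
    have h0 : (0 : ℚ) < m := by exact_mod_cast (by omega : 0 < m)
    rw [div_le_one (by positivity)]
    exact_mod_cast Nat.factorial_le_pow m
  have h0 : (0 : ℚ) ≤ (m.factorial : ℚ) / (m : ℚ) ^ m := by positivity
  have hmono : ∀ j, j ≤ k →
      (4 / 81 : ℚ) < ((m.factorial : ℚ) / (m : ℚ) ^ m) ^ j := fun j hj =>
    h.trans_le (pow_le_pow_of_le_one h0 hle1 hj)
  have hm4 : m ≤ 4 := by
    by_contra hc
    have hf : ∀ n, 5 ≤ n → 81 * n.factorial ≤ 4 * n ^ n := by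
      intro n hn
      induction n, hn using Nat.le_induction with
      | base => decide
      | succ n hn ih =>
        rw [Nat.factorial_succ, pow_succ]
        have : n ^ n ≤ (n + 1) ^ n := Nat.pow_le_pow_left (by omega) n
        nlinarith
    have h1 := hmono 1 hk
    rw [pow_one, lt_div_iff₀ (by positivity)] at h1
    have h2 : (81 * m.factorial : ℚ) ≤ 4 * (m : ℚ) ^ m := by exact_mod_cast hf m (by omega)
    linarith
  interval_cases m
  · left
    refine ⟨rfl, ?_⟩
    by_contra hc
    have := hmono 5 (by omega)
    norm_num [Nat.factorial] at this
  · right; left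
    refine ⟨rfl, ?_⟩
    by_contra hc
    have := hmono 2 (by omega)
    norm_num [Nat.factorial] at this
  · right; right
    refine ⟨rfl, ?_⟩
    by_contra hc
    have := hmono 2 (by omega)
    norm_num [Nat.factorial] at this

/-! ### Sections -/

theorem HasSectionIsomorphicTo.trans {G X Y : Type*} [Group G] [Group X] [Group Y]
    (h : HasSectionIsomorphicTo G X) (h' : HasSectionIsomorphicTo X Y) :
    HasSectionIsomorphicTo G Y := by
  obtain ⟨K, φ, hφ⟩ := h
  obtain ⟨L, ψ, hψ⟩ := h'
  let e := (L.comap φ).equivMapOfInjective K.subtype K.subtype_injective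
  refine ⟨(L.comap φ).map K.subtype, (ψ.comp (φ.subgroupComap L)).comp e.symm.toMonoidHom, ?_⟩
  have h1 : Function.Surjective (φ.subgroupComap L) :=
    φ.subgroupComap_surjective_of_surjective L hφ
  exact (hψ.comp h1).comp e.symm.surjective

theorem hasSection_of_surjective {G X : Type*} [Group G] [Group X] (f : G →* X)
    (hf : Function.Surjective f) : HasSectionIsomorphicTo G X :=
  ⟨⊤, f.comp (⊤ : Subgroup G).subtype, fun x => by
    obtain ⟨g, rfl⟩ := hf x
    exact ⟨⟨g, trivial⟩, rfl⟩⟩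

theorem hasSection_of_injective {G X : Type*} [Group G] [Group X] (f : X →* G)
    (hf : Function.Injective f) : HasSectionIsomorphicTo G X :=
  ⟨f.range, (MonoidHom.ofInjective hf).symm.toMonoidHom,
    (MonoidHom.ofInjective hf).symm.surjective⟩

theorem hasSection_subgroup {G : Type*} [Group G] (L : Subgroup G) :
    HasSectionIsomorphicTo G L :=
  ⟨L, MonoidHom.id L, Function.surjective_id⟩

/-- An involution inverting an element of order `p > 2` generates with it a dihedral group. -/
theorem hasSection_dihedral {X : Type*} [Group X] (t x : X) (p : ℕ) (hp : 2 < p)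
    (ht : t * t = 1) (hx : orderOf x = p) (htx : t * x * t = x⁻¹) :
    HasSectionIsomorphicTo X (DihedralGroup p) := by
  let e : ZMod p →+ Additive X := ZMod.lift p ⟨zmultiplesHom _ (Additive.ofMul x), by
    rw [zmultiplesHom_apply, ← ofMul_zpow, zpow_natCast, ← hx, pow_orderOf_eq_one]; rfl⟩
  let E : ZMod p → X := fun i => (e i).toMul
  have Eint : ∀ n : ℤ, E n = x ^ n := fun n => by
    change (e n).toMul = _
    rw [ZMod.lift_coe]
    rfl
  have Eadd : ∀ i j, E (i + j) = E i * E j := fun i j => by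
    change (e (i + j)).toMul = _
    rw [map_add]; rfl
  have hti : t⁻¹ = t := inv_eq_of_mul_eq_one_left ht
  have tconj : ∀ n : ℤ, t * x ^ n * t = x ^ (-n) := by
    intro n
    have : t * x * t⁻¹ = x⁻¹ := by rw [hti, htx]
    calc t * x ^ n * t = t * x ^ n * t⁻¹ := by rw [hti]
      _ = (t * x * t⁻¹) ^ n := by rw [conj_zpow]
      _ = _ := by rw [this, inv_zpow, zpow_neg]
  have Econj : ∀ i, E i * t = t * E (-i) := by
    intro i
    obtain ⟨n, rfl⟩ := ZMod.intCast_surjective i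
    rw [← Int.cast_neg, Eint, Eint, ← tconj n, ← mul_assoc, ← mul_assoc, ht, one_mul]
  let f : DihedralGroup p → X := fun d => match d with
    | DihedralGroup.r i => E i
    | DihedralGroup.sr i => t * E i
  have E0 : E 0 = 1 := by simpa using Eint 0
  have hf : ∀ a b, f (a * b) = f a * f b := by
    rintro (i | i) (j | j)
    · exact Eadd i j
    · change t * E (j - i) = E i * (t * E j)
      rw [← mul_assoc, Econj, mul_assoc, ← Eadd, neg_add_eq_sub]
    · change t * E (i + j) = t * E i * E j
      rw [Eadd, mul_assoc]
    · change E (j - i) = t * E i * (t * E j)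
      rw [mul_assoc, ← mul_assoc (E i), Econj, mul_assoc, ← Eadd, neg_add_eq_sub, ← mul_assoc, ht,
        one_mul]
  have E1 : ∀ i, E i = 1 → i = 0 := by
    intro i hi
    obtain ⟨n, rfl⟩ := ZMod.intCast_surjective i
    rw [Eint] at hi
    rw [ZMod.intCast_zmod_eq_zero_iff_dvd, ← hx]
    exact orderOf_dvd_iff_zpow_eq_one.2 hi
  refine hasSection_of_injective (MonoidHom.mk' f hf) ?_
  rw [injective_iff_map_eq_one]
  rintro (i | i) h
  · change E i = 1 at h
    rw [E1 i h]; rfl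
  · exfalso
    -- `t` would be a power of `x`, hence commute with it, so that `x = x⁻¹`
    change t * E i = 1 at h
    obtain ⟨n, rfl⟩ := ZMod.intCast_surjective i
    rw [Eint] at h
    have htn : t = x ^ (-n) := by rw [zpow_neg]; exact eq_inv_of_mul_eq_one_left h
    have hc : t * x = x * t := by rw [htn]; exact ((Commute.refl x).zpow_left _)
    rw [hc, mul_assoc, ht, mul_one] at htx
    have : x ^ 2 = 1 := by rw [pow_two]; nth_rewrite 2 [htx]; simp
    have := Nat.le_of_dvd (by norm_num) (orderOf_dvd_of_pow_eq_one this)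
    omega

/-- If `M` has even order and meets its conjugates by elements outside `M` trivially, then `t` can
be taken as an involution of `M` and `x` as the product of `t` with a conjugate of `t`
outside `M`. -/
theorem exists_inverted {X : Type*} [Group X] [Finite X] (M : Subgroup X) (hMtop : M ≠ ⊤)
    (hM : ∀ g ∉ M, ∀ a ∈ M, g⁻¹ * a * g ∈ M → a = 1) (heven : 2 ∣ Nat.card M) :
    ∃ t x : X, t * t = 1 ∧ x ≠ 1 ∧ Odd (orderOf x) ∧ t * x * t = x⁻¹ := by
  have : Fact (Nat.Prime 2) := ⟨Nat.prime_two⟩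
  obtain ⟨⟨t, htM⟩, hto⟩ := exists_prime_orderOf_dvd_card' 2 heven
  rw [Subgroup.orderOf_mk] at hto
  have ht : t * t = 1 := by rw [← pow_two, ← hto, pow_orderOf_eq_one]
  have ht1 : t ≠ 1 := by
    rintro rfl
    rw [orderOf_one] at hto
    omega
  have hti : t⁻¹ = t := inv_eq_of_mul_eq_one_left ht
  obtain ⟨g, hg⟩ : ∃ g, g ∉ M := by
    by_contra! hc
    exact hMtop (eq_top_iff.2 fun g _ => hc g)
  have hcent : ∀ z : X, t * z = z * t → z ∈ M := by
    intro z hz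
    by_contra hzM
    exact ht1 (hM z hzM t htM (by rw [mul_assoc, hz, inv_mul_cancel_left]; exact htM))
  obtain ⟨s, hs⟩ : ∃ s, s = g * t * g⁻¹ := ⟨_, rfl⟩
  have hss : s * s = 1 := by
    rw [hs]
    calc g * t * g⁻¹ * (g * t * g⁻¹) = g * (t * t) * g⁻¹ := by group
      _ = 1 := by rw [ht]; group
  have hsi : s⁻¹ = s := inv_eq_of_mul_eq_one_left hss
  have hsM : s ∉ M := by
    intro h
    apply ht1
    refine hM g⁻¹ (fun h => hg (by simpa using M.inv_mem h)) t htM ?_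
    rw [inv_inv, ← hs]; exact h
  have hinv : t * (t * s) * t = (t * s)⁻¹ := by
    rw [← mul_assoc, ht, one_mul, mul_inv_rev, hti, hsi]
  have hinv' : s * (t * s) * s = (t * s)⁻¹ := by
    rw [mul_assoc, mul_assoc, hss, mul_one, mul_inv_rev, hti, hsi]
  refine ⟨t, t * s, ht, ?_, ?_, hinv⟩
  · intro h
    apply hsM
    have : s = t := by rw [← inv_eq_of_mul_eq_one_right h, hti]
    rw [this]; exact htM
  · rw [← Nat.not_even_iff_odd]
    -- an involution among the powers of `t * s` would centralize both `t` and `s`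
    rintro ⟨e, he⟩
    have hpos := orderOf_pos (t * s)
    obtain ⟨z, hz⟩ : ∃ z, z = (t * s) ^ e := ⟨_, rfl⟩
    have hz1 : z ≠ 1 := by
      rw [hz]
      intro h
      have := Nat.le_of_dvd (by omega) (orderOf_dvd_of_pow_eq_one h)
      omega
    have hzi : z⁻¹ = z := by
      apply inv_eq_of_mul_eq_one_left
      rw [hz, ← pow_add, ← he, pow_orderOf_eq_one]
    have comm : ∀ u : X, u * u = 1 → u * (t * s) * u = (t * s)⁻¹ → u * z = z * u := by
      intro u hu hux
      have hui : u⁻¹ = u := inv_eq_of_mul_eq_one_left hu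
      have : u * z * u⁻¹ = z := by
        rw [hz, ← conj_pow, hui, hux, inv_pow, ← hz, hzi]
      exact mul_inv_eq_iff_eq_mul.1 this
    have hzM := hcent z (comm t ht hinv)
    have hzM' : g⁻¹ * z * g ∈ M := by
      apply hcent
      have := comm s hss hinv'
      rw [hs] at this
      calc t * (g⁻¹ * z * g) = g⁻¹ * (g * t * g⁻¹ * z) * g := by group
        _ = g⁻¹ * (z * (g * t * g⁻¹)) * g := by rw [this]
        _ = _ := by group
    exact hz1 (hM g hg z hzM hzM')

/-- Four points with stabilizers of order `3`: the action on the cosets of a core-free subgroup of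
order `3` and index `4` identifies the group with the alternating group. -/
theorem hasSection_alternating {X : Type*} [Group X] [Finite X] (M : Subgroup X)
    (hcore : M.normalCore = ⊥) (hM : Nat.card M = 3) (hi : M.index = 4) :
    HasSectionIsomorphicTo X (alternatingGroup (Fin 4)) := by
  let e : (X ⧸ M) ≃ Fin 4 := Finite.equivFinOfCardEq hi
  let f : X →* Equiv.Perm (Fin 4) :=
    e.permCongrHom.toMonoidHom.comp (MulAction.toPermHom X (X ⧸ M))
  have hf : Function.Injective f := by
    refine e.permCongrHom.injective.comp ?_
    rw [← MonoidHom.ker_eq_bot_iff, ← Subgroup.normalCore_eq_ker, hcore]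
  have hcard : Nat.card f.range = 12 := by
    rw [← Nat.card_congr (MonoidHom.ofInjective hf).toEquiv, ← M.card_mul_index, hM, hi]
  have hindex : f.range.index = 2 := by
    have := f.range.card_mul_index
    rw [hcard, Nat.card_perm, Nat.card_fin] at this
    have h24 : Nat.factorial 4 = 24 := rfl
    omega
  have halt := Equiv.Perm.eq_alternatingGroup_of_index_eq_two hindex
  have hmem : ∀ x, f x ∈ alternatingGroup (Fin 4) := fun x => halt ▸ ⟨x, rfl⟩
  refine hasSection_of_surjective (f.codRestrict _ hmem) ?_
  rintro ⟨y, hy⟩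
  have hy' : y ∈ f.range := halt ▸ hy
  obtain ⟨x, rfl⟩ := hy'
  exact ⟨x, rfl⟩

/-! ### Minimal non-nilpotent groups -/

theorem lt_normalizer_inf_of_nilpotent {X : Type*} [Group X] {D A : Subgroup X} (hDA : D < A)
    (hA : Group.IsNilpotent A) : D < Subgroup.normalizer (D : Set X) ⊓ A := by
  have h := Group.normalizerCondition_of_isNilpotent (G := A) (D.subgroupOf A) (by
    rw [lt_top_iff_ne_top, Ne, Subgroup.subgroupOf_eq_top]
    exact not_le_of_gt hDA)
  rw [← Subgroup.subgroupOf_normalizer_eq hDA.le] at h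
  obtain ⟨-, hn⟩ := SetLike.lt_iff_le_and_exists.1 h
  obtain ⟨x, hx, hxD⟩ := hn
  refine SetLike.lt_iff_le_and_exists.2 ⟨le_inf Subgroup.le_normalizer hDA.le, (x : X), ?_, hxD⟩
  exact Subgroup.mem_inf.2 ⟨hx, x.2⟩

/-- If all proper subgroups and all proper quotients of the non-nilpotent group `X` are nilpotent,
a non-normal maximal subgroup `M` is core-free and meets its other conjugates trivially. The proof
considers an intersection `D = M ⊓ L` of largest order with a further maximal subgroup `L`:
as normalizers grow in the nilpotent groups `M` and `L`, no maximal subgroup contains the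
normalizer of `D`, so `D` is normal. -/
theorem exists_free_subgroup {X : Type*} [Group X] [Finite X] (hX : ¬ Group.IsNilpotent X)
    (hsub : ∀ L : Subgroup X, L ≠ ⊤ → Group.IsNilpotent L)
    (hquot : ∀ (N : Subgroup X) [N.Normal], N ≠ ⊥ → Group.IsNilpotent (X ⧸ N)) :
    ∃ M : Subgroup X, M ≠ ⊤ ∧ M ≠ ⊥ ∧ M.normalCore = ⊥ ∧
      ∀ g ∉ M, ∀ a ∈ M, g⁻¹ * a * g ∈ M → a = 1 := by
  have h := ((Group.isNilpotent_of_finite_tfae (G := X)).out 0 2).not.1 hX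
  push Not at h
  obtain ⟨M, hM, hMn⟩ := h
  have hnorm : Subgroup.normalizer (M : Set X) = M := by
    rcases hM.le_iff.1 (Subgroup.le_normalizer (H := M)) with h | h
    · exact absurd (Subgroup.normalizer_eq_top_iff.1 h) hMn
    · exact h
  have hnormal : ∀ N : Subgroup X, N.Normal → N ≤ M → N = ⊥ := by
    intro N hN hNM
    by_contra hb
    have hnil := hquot N hb
    have hcm : (M.map (QuotientGroup.mk' N)).comap (QuotientGroup.mk' N) = M :=
      Subgroup.comap_map_eq_self (by simpa using hNM)
    have hlt : M.map (QuotientGroup.mk' N) < ⊤ := by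
      rw [lt_top_iff_ne_top]
      intro h
      rw [h, Subgroup.comap_top] at hcm
      exact hM.1 hcm.symm
    have := Group.normalizerCondition_of_isNilpotent (G := X ⧸ N) _ hlt
    refine this.ne ?_
    apply Subgroup.comap_injective (QuotientGroup.mk'_surjective N)
    rw [Subgroup.comap_normalizer_eq_of_surjective _ (QuotientGroup.mk'_surjective N), hcm, hnorm]
  have hdisj : ∀ L : Subgroup X, IsCoatom L → L ≠ M → M ⊓ L = ⊥ := by
    intro L₀ hL₀ hne₀
    by_contra hb
    let S := {L : Subgroup X // IsCoatom L ∧ L ≠ M}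
    have : Finite S := Subtype.finite
    have : Nonempty S := ⟨⟨L₀, hL₀, hne₀⟩⟩
    obtain ⟨⟨L, hL, hne⟩, hmax⟩ := Finite.exists_max
      (fun L : S => Nat.card (M ⊓ L.1 : Subgroup X))
    have hDb : M ⊓ L ≠ ⊥ := by
      intro h
      have h1 := hmax ⟨L₀, hL₀, hne₀⟩
      simp only [h] at h1
      rw [Subgroup.card_bot] at h1
      exact hb (Subgroup.card_le_one_iff_eq_bot _ |>.1 h1)
    have hDM : M ⊓ L < M := by
      refine lt_of_le_of_ne inf_le_left fun h => ?_
      have h1 : M ≤ L := inf_eq_left.1 h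
      rcases hM.le_iff.1 h1 with h2 | h2
      · exact hL.1 h2
      · exact hne h2
    have hDL : M ⊓ L < L := by
      refine lt_of_le_of_ne inf_le_right fun h => ?_
      have h1 : L ≤ M := inf_eq_right.1 h
      rcases hL.le_iff.1 h1 with h2 | h2
      · exact hM.1 h2
      · exact hne h2.symm
    have h1 := lt_normalizer_inf_of_nilpotent hDM (hsub M hM.1)
    have h2 := lt_normalizer_inf_of_nilpotent hDL (hsub L hL.1)
    rcases eq_top_or_exists_le_coatom (Subgroup.normalizer ((M ⊓ L : Subgroup X) : Set X))
      with h3 | ⟨K, hK, hle⟩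
    · exact hDb (hnormal _ (Subgroup.normalizer_eq_top_iff.1 h3) inf_le_left)
    · by_cases hKM : K = M
      · subst hKM
        exact not_le_of_gt h2 (inf_le_inf_right L hle)
      · have h4 : M ⊓ L < M ⊓ K :=
          h1.trans_le (le_inf inf_le_right (inf_le_left.trans hle))
        have h5 := hmax ⟨K, hK, hKM⟩
        exact h4.ne (Subgroup.eq_of_le_of_card_ge h4.le h5)
  refine ⟨M, hM.1, ?_, hnormal _ inferInstance (Subgroup.normalCore_le M), ?_⟩
  · rintro rfl
    exact hMn inferInstance
  · intro g hg a ha hga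
    let c := MulAut.conj g
    have hco : IsCoatom (M.map c.toMonoidHom) :=
      (OrderIso.isCoatom_iff c.mapSubgroup M).2 hM
    have hne : M.map c.toMonoidHom ≠ M := by
      intro h
      apply hg
      rw [← hnorm, Subgroup.mem_normalizer_iff]
      intro b
      constructor
      · intro hb
        rw [← h]
        exact ⟨b, hb, rfl⟩
      · intro hb
        rw [← h] at hb
        obtain ⟨b', hb', e⟩ := hb
        have : b' = b := c.injective e
        exact this ▸ hb'
    have hmem : a ∈ M ⊓ M.map c.toMonoidHom := by
      refine ⟨ha, g⁻¹ * a * g, hga, ?_⟩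
      simp [c, mul_assoc]
    rw [hdisj _ hco hne] at hmem
    simpa using hmem

/-- The sections forced by the three numerical possibilities for `m = |M|` and `k`. For `m = 2`,
`k = 4` the inverted element `x` may have order `9`, in which case `x ^ 3` is used. -/
theorem hasSection_of_free {X : Type*} [Group X] [Finite X] (M : Subgroup X) (hMtop : M ≠ ⊤)
    (hcore : M.normalCore = ⊥) (hM : ∀ g ∉ M, ∀ a ∈ M, g⁻¹ * a * g ∈ M → a = 1) (k : ℕ)
    (hk : 1 ≤ k) (hindex : M.index = 1 + k * Nat.card M)
    (h : (Nat.card M = 2 ∧ k ≤ 4) ∨ (Nat.card M = 3 ∧ k = 1) ∨ (Nat.card M = 4 ∧ k = 1)) :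
    HasSectionIsomorphicTo X (alternatingGroup (Fin 4)) ∨
      HasSectionIsomorphicTo X (DihedralGroup 3) ∨
      HasSectionIsomorphicTo X (DihedralGroup 5) ∨
      HasSectionIsomorphicTo X (DihedralGroup 7) := by
  by_cases h3 : Nat.card M = 3
  · left
    refine hasSection_alternating M hcore h3 ?_
    have : k = 1 := by omega
    rw [hindex, h3, this]
  right
  obtain ⟨t, x, ht, hx1, hodd, htx⟩ := exists_inverted M hMtop hM (by omega)
  have hdvd : orderOf x ∣ M.index := by
    have h1 : orderOf x ∣ Nat.card M * M.index := M.card_mul_index ▸ orderOf_dvd_natCard x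
    have h2 : Nat.Coprime (orderOf x) 2 := Nat.coprime_two_right.2 hodd
    have h4 : Nat.Coprime (orderOf x) (Nat.card M) := by
      rcases h with ⟨h, -⟩ | ⟨h, -⟩ | ⟨h, -⟩
      · rw [h]; exact h2
      · exact absurd h h3
      · rw [h]; exact Nat.Coprime.pow_right 2 h2
    exact h4.dvd_of_dvd_mul_left h1
  have hn : M.index = 3 ∨ M.index = 5 ∨ M.index = 7 ∨ M.index = 9 := by
    rcases h with ⟨h, hk'⟩ | ⟨h, -⟩ | ⟨h, hk'⟩
    · rw [h] at hindex; omega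
    · exact absurd h h3
    · rw [h, hk'] at hindex; omega
  have hd1 : orderOf x ≠ 1 := fun h => hx1 (orderOf_eq_one_iff.1 h)
  have hd : orderOf x = 3 ∨ orderOf x = 5 ∨ orderOf x = 7 ∨ orderOf x = 9 := by
    have hle : orderOf x ≤ 9 := by
      refine (Nat.le_of_dvd (by omega) hdvd).trans (by omega)
    obtain ⟨c, hc⟩ := hodd
    omega
  rcases hd with hd | hd | hd | hd
  · exact Or.inl (hasSection_dihedral t x 3 (by norm_num) ht hd htx)
  · exact Or.inr (Or.inl (hasSection_dihedral t x 5 (by norm_num) ht hd htx))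
  · exact Or.inr (Or.inr (hasSection_dihedral t x 7 (by norm_num) ht hd htx))
  · refine Or.inl (hasSection_dihedral t (x ^ 3) 3 (by norm_num) ht ?_ ?_)
    · rw [orderOf_pow_of_dvd (by norm_num) (by rw [hd]; norm_num), hd]
    · have hti : t⁻¹ = t := inv_eq_of_mul_eq_one_left ht
      have htx' : t * x * t⁻¹ = x⁻¹ := by rw [hti, htx]
      calc t * x ^ 3 * t = t * x ^ 3 * t⁻¹ := by rw [hti]
        _ = (x ^ 3)⁻¹ := by rw [← conj_pow, htx', inv_pow]

/-- Induction on the order of a non-nilpotent section `X` of `G`: either a smaller non-nilpotent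
section is available, or `X` satisfies the hypotheses of `exists_free_subgroup`. -/
theorem exists_section {G : Type*} [Group G] [Finite G] (h : tp G > (4 / 81 : ℚ)) (n : ℕ) :
    ∀ (X : Type _) [Group X] [Finite X], Nat.card X = n → HasSectionIsomorphicTo G X →
      ¬ Group.IsNilpotent X →
      HasSectionIsomorphicTo G (alternatingGroup (Fin 4)) ∨
      HasSectionIsomorphicTo G (DihedralGroup 3) ∨
      HasSectionIsomorphicTo G (DihedralGroup 5) ∨
      HasSectionIsomorphicTo G (DihedralGroup 7) := by
  induction n using Nat.strong_induction_on with
  | _ n ih =>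
  intro X _ _ hn hGX hX
  by_cases hsub : ∀ L : Subgroup X, L ≠ ⊤ → Group.IsNilpotent L
  swap
  · push Not at hsub
    obtain ⟨L, hL, hLn⟩ := hsub
    refine ih (Nat.card L) ?_ L rfl (hGX.trans (hasSection_subgroup L)) hLn
    rw [← hn]
    exact lt_of_le_of_ne (Subgroup.card_le_card_group L)
      fun h => hL (Subgroup.eq_top_of_card_eq L h)
  by_cases hquot : ∀ (N : Subgroup X) [N.Normal], N ≠ ⊥ → Group.IsNilpotent (X ⧸ N)
  swap
  · push Not at hquot
    obtain ⟨N, hN, hNb, hNn⟩ := hquot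
    refine ih (Nat.card (X ⧸ N)) ?_ (X ⧸ N) rfl (hGX.trans
      (hasSection_of_surjective (QuotientGroup.mk' N) (QuotientGroup.mk'_surjective N))) hNn
    rw [← hn, Subgroup.card_eq_card_quotient_mul_card_subgroup N]
    have h1 : 1 < Nat.card N := (Subgroup.one_lt_card_iff_ne_bot N).2 hNb
    have h2 : 0 < Nat.card (X ⧸ N) := Nat.card_pos
    nlinarith
  obtain ⟨M, hMtop, hMbot, hcore, hM⟩ := exists_free_subgroup hX hsub hquot
  obtain ⟨k, hindex, hP⟩ := transProb_le_of_free M hM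
  have hGX' := hGX
  obtain ⟨K, φ, hφ⟩ := hGX'
  obtain ⟨H, hH⟩ := exists_transProb_le K φ hφ M
  have hbound := h.trans_le ((tp_le_transProb H).trans (hH.trans hP))
  have hk : 1 ≤ k := by
    by_contra hc
    have hk0 : k = 0 := by omega
    rw [hk0, zero_mul, add_zero, Subgroup.index_eq_one] at hindex
    exact hMtop hindex
  have hm : 2 ≤ Nat.card M := (Subgroup.one_lt_card_iff_ne_bot M).2 hMbot
  rcases hasSection_of_free M hMtop hcore hM k hk hindex (small_of_bound _ k hm hk hbound)
    with h | h | h | h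
  · exact Or.inl (hGX.trans h)
  · exact Or.inr (Or.inl (hGX.trans h))
  · exact Or.inr (Or.inr (Or.inl (hGX.trans h)))
  · exact Or.inr (Or.inr (Or.inr (hGX.trans h)))

theorem stmt15 (G : Type*) [Group G] [Finite G] (h : tp G > (4 / 81 : ℚ)) :
    Group.IsNilpotent G ∨
      HasSectionIsomorphicTo G (alternatingGroup (Fin 4)) ∨
      HasSectionIsomorphicTo G (DihedralGroup 3) ∨
      HasSectionIsomorphicTo G (DihedralGroup 5) ∨
      HasSectionIsomorphicTo G (DihedralGroup 7) := by
  by_cases hG : Group.IsNilpotent G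
  · exact Or.inl hG
  · exact Or.inr (exists_section h _ G rfl
      (hasSection_of_surjective (MonoidHom.id G) Function.surjective_id) hG)
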